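/- arXiv:2407.03851 — 4 statements merged into one kernel-verified Lean document; each statement's English description precedes it below -/
import Mathlib

section
/- Let d ≥ 2, R > 0, D ≥ 0, and let φ : B_R^d → ℝ be a C² function whose second derivative has operator norm at most D at every point. For every δ with 0 < δ ≤ R(1 − 1/√2) there exist a natural number N ≤ (14/3)·d·(32R/δ)^((d+1)/2), a fully-connected ReLU network F : ℝ^(d+1) → ℝ of width d+1 and depth N, and a continuous function φ̂ : B_R^d → ℝ such that the zero set {(x,y) ∈ B_R^d × ℝ : F(x,y) = 0} equals the graph {(x, φ̂(x)) : x ∈ B_R^d}, and sup_{x ∈ B_R^d} |φ(x) − φ̂(x)| ≤ (7(1+√2)/√2)·D·(d−1)·R^(3/2)·δ^(1/2). -/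
/-!
A layer of width `d + 1` can apply the ReLU in any linear coordinates of `ℝ ^ d × ℝ`, so it can
*collapse* a half-space `⟪u, x⟫ > r` onto its boundary along a direction `(u, c)` with `‖u‖ = 1`,
fixing all other points (`Realizes.collapse`). If a hypersurface is the graph of `g`, its preimage
under a collapse is the graph of the function equal to `g` where `⟪u, x⟫ ≤ r` and extended beyond
with constant slope `c` in direction `u`. Hence a chain of collapses, followed by `y - g x` with `g`
affine, has a graph as zero set (`Realizes.exists_run`). The only other layer clips `y` from below,
which keeps the neurons active and does not touch the zero set.

The collapses are arranged in concentric rounds. A round with radii `r < ρ ≤ √2 r` runs over a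
net of unit vectors `u` and cuts off the caps `⟪u, x⟫ > r` of the ball of radius `ρ`. A later
collapse of the round never violates an earlier constraint (`Collapse.inner_push_le`), so the round
maps the ball of radius `ρ` into a smaller one; with caps of radius `w = √(ρ² - r²)` and a net of
angular resolution of order `w / R`, the squared radius drops by `w² / 2`. The slope of each
collapse is the derivative of `φ` at the centre of its cap along `u`, so pushing a point by a
distance `s` costs an error `D w s`, and `s` is at most `√2` times the decrease of the norm. These
errors telescope to `√2 D w R` (`Collapse.round_error`), and once the radius is at most `√2 w` the
linearization of `φ` at the origin suffices (`Collapse.exists_list`).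

With `w = 2 (d - 1) √(δ R)` there are of order `R / δ` rounds. Since `w` carries the factor
`d - 1`, projecting a grid on the faces of a cube to the sphere gives a fine enough net, of
cardinality of order `d (4 √(R / δ)) ^ (d - 1)` (`exists_direction_net`).
-/

open scoped RealInnerProductSpace

/-- The componentwise ReLU layer `x ↦ ReLU (A x + b)`. -/
noncomputable def reluLayer {n : ℕ} (A : Matrix (Fin n) (Fin n) ℝ) (b : Fin n → ℝ) :
    (Fin n → ℝ) → (Fin n → ℝ) :=
  fun x i => max (A.mulVec x i + b i) 0

/-- `iterComp f N = f (N-1) ∘ ⋯ ∘ f 1 ∘ f 0`. -/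
def iterComp {α : Type*} (f : ℕ → α → α) : ℕ → α → α
  | 0 => id
  | (k+1) => fun x => f k (iterComp f k x)

/-! ### Collapses of half-spaces and their errors -/

/-- The data `(u, r, c)` of the map of `E × ℝ` that slides every point of the half-space
`⟪u, x⟫ > r` along the direction `(u, c)` until it meets the hyperplane `⟪u, x⟫ = r`. -/
structure Collapse (E : Type*) where
  dir : E
  level : ℝ
  slope : ℝ

namespace Collapse

section Inner

variable {E : Type*} [NormedAddCommGroup E] [InnerProductSpace ℝ E]

/-- How far `x` lies beyond the hyperplane `⟪u, x⟫ = r`; zero on the near side. -/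
noncomputable def depth (f : Collapse E) (x : E) : ℝ := max (⟪f.dir, x⟫ - f.level) 0

/-- The action on the `E`-component: the metric projection to the near half-space when `dir` is a
unit vector. -/
noncomputable def push (f : Collapse E) (x : E) : E := x - f.depth x • f.dir

/-- The composite of the pushes, with the head of the list acting first. -/
noncomputable def run : List (Collapse E) → E → E
  | [], x => x
  | f :: l, x => run l (f.push x)

/-- The function whose graph is the preimage of the graph of `g` under the collapses of the list,
the head of the list acting first. -/
noncomputable def val (g : E → ℝ) : List (Collapse E) → E → ℝ
  | [], x => g x
  | f :: l, x => f.slope * f.depth x + val g l (f.push x)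

lemma depth_nonneg (f : Collapse E) (x : E) : 0 ≤ f.depth x := le_max_right _ _

lemma push_eq_self {f : Collapse E} {x : E} (h : ⟪f.dir, x⟫ ≤ f.level) : f.push x = x := by
  have : f.depth x = 0 := max_eq_right (by linarith)
  simp [push, this]

lemma depth_eq {f : Collapse E} {x : E} (h : f.level ≤ ⟪f.dir, x⟫) :
    f.depth x = ⟪f.dir, x⟫ - f.level := max_eq_left (by linarith)

lemma inner_push {f : Collapse E} (hu : ‖f.dir‖ = 1) {x : E} (h : f.level ≤ ⟪f.dir, x⟫) :
    ⟪f.dir, f.push x⟫ = f.level := by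
  rw [push, inner_sub_right, inner_smul_right, real_inner_self_eq_norm_sq, hu, depth_eq h]; ring

lemma norm_push_sq {f : Collapse E} (hu : ‖f.dir‖ = 1) (x : E) :
    ‖f.push x‖ ^ 2 = ‖x‖ ^ 2 - f.depth x * (2 * f.level + f.depth x) := by
  have h1 : f.depth x * (⟪f.dir, x⟫ - f.level) = f.depth x * f.depth x := by
    rcases le_total f.level ⟪f.dir, x⟫ with h | h
    · rw [depth_eq h]
    · rw [show f.depth x = 0 from max_eq_right (by linarith)]; simp
  rw [push, norm_sub_sq_real, inner_smul_right, norm_smul, hu, real_inner_comm, mul_one,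
    Real.norm_eq_abs, sq_abs]
  linear_combination -2 * h1

lemma norm_push_le {f : Collapse E} (hu : ‖f.dir‖ = 1) (hr : 0 ≤ f.level) (x : E) :
    ‖f.push x‖ ≤ ‖x‖ := by
  have := norm_push_sq hu x
  have h2 := f.depth_nonneg x
  exact le_of_sq_le_sq (by nlinarith [mul_nonneg h2 hr, mul_nonneg h2 h2]) (norm_nonneg _)

lemma depth_le_norm {f : Collapse E} (hu : ‖f.dir‖ = 1) (hr : 0 ≤ f.level) (x : E) :
    f.depth x ≤ ‖x‖ := by
  refine max_le ?_ (norm_nonneg _)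
  have := real_inner_le_norm f.dir x
  rw [hu, one_mul] at this
  linarith

/-- When the cap is shallow, the length of a push is controlled by the decrease of the norm; this
makes the errors of successive collapses telescope. -/
lemma depth_le_sub {f : Collapse E} (hu : ‖f.dir‖ = 1) (hr : 0 < f.level) {ρ : ℝ}
    (hρ : ρ ^ 2 ≤ 2 * f.level ^ 2) {x : E} (hx : ‖x‖ ≤ ρ) :
    f.depth x ≤ Real.sqrt 2 * (‖x‖ - ‖f.push x‖) := by
  have h1 := norm_push_sq hu x
  have h2 := f.depth_nonneg x
  have h3 := norm_push_le hu hr.le x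
  have h4 : ‖x‖ ≤ Real.sqrt 2 * f.level := by
    refine le_of_sq_le_sq ?_ (by positivity)
    rw [mul_pow, Real.sq_sqrt (by norm_num)]
    nlinarith [norm_nonneg x]
  have h5 : f.level * f.depth x ≤ f.level * (Real.sqrt 2 * (‖x‖ - ‖f.push x‖)) := by
    nlinarith [mul_nonneg h2 h2, mul_nonneg (sub_nonneg.2 h3) (sub_nonneg.2 h4),
      mul_nonneg (sub_nonneg.2 h3) (sub_nonneg.2 h3)]
  exact le_of_mul_le_mul_left h5 hr

lemma norm_sub_center_le {f : Collapse E} (hu : ‖f.dir‖ = 1) (hr : 0 ≤ f.level) {ρ w : ℝ}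
    (hw : 0 ≤ w) (hρw : ρ ^ 2 - f.level ^ 2 ≤ w ^ 2) {x : E} (hx : ‖x‖ ≤ ρ)
    (h : f.level ≤ ⟪f.dir, x⟫) : ‖x - f.level • f.dir‖ ≤ w := by
  refine le_of_sq_le_sq ?_ hw
  rw [norm_sub_sq_real, inner_smul_right, norm_smul, hu, real_inner_comm, mul_one,
    Real.norm_eq_abs, sq_abs]
  nlinarith [norm_nonneg x, mul_le_mul_of_nonneg_left h hr]

/-- A point of the cap cannot leave the half-space of another direction: after the push the
component orthogonal to `f.dir` has length at most `√(ρ² - r²) ≤ r`. -/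
lemma inner_push_le {f : Collapse E} (hu : ‖f.dir‖ = 1) (hr : 0 ≤ f.level) {ρ : ℝ}
    (hρ : ρ ^ 2 ≤ 2 * f.level ^ 2) {x : E} (hx : ‖x‖ ≤ ρ) {v : E} (hv : ‖v‖ = 1)
    (hvx : ⟪v, x⟫ ≤ f.level) : ⟪v, f.push x⟫ ≤ f.level := by
  rcases le_total ⟪f.dir, x⟫ f.level with h | h
  · rwa [push_eq_self h]
  rcases le_total 0 ⟪v, f.dir⟫ with h0 | h0
  · rw [push, inner_sub_right, inner_smul_right]
    nlinarith [mul_nonneg (f.depth_nonneg x) h0]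
  · have h1 := norm_sub_center_le hu hr hr (by linarith)
      ((norm_push_le hu hr x).trans hx) (inner_push hu h).ge
    have h2 := real_inner_le_norm v (f.push x - f.level • f.dir)
    rw [hv, one_mul, inner_sub_right, inner_smul_right] at h2
    nlinarith [mul_nonneg hr (neg_nonneg.2 h0)]

lemma norm_run_le {l : List (Collapse E)} (h : ∀ f ∈ l, ‖f.dir‖ = 1 ∧ 0 ≤ f.level) (x : E) :
    ‖run l x‖ ≤ ‖x‖ := by
  induction l generalizing x with
  | nil => exact le_rfl
  | cons f l ih =>
    have hf := h f (by simp)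
    exact (ih (fun g hg => h g (by simp [hg])) _).trans (norm_push_le hf.1 hf.2 x)

lemma inner_run_le {r ρ : ℝ} (hr : 0 ≤ r) (hρ : ρ ^ 2 ≤ 2 * r ^ 2)
    {l : List (Collapse E)} (h : ∀ f ∈ l, ‖f.dir‖ = 1 ∧ f.level = r) {x : E} (hx : ‖x‖ ≤ ρ)
    {v : E} (hv : ‖v‖ = 1) (hvx : ⟪v, x⟫ ≤ r) : ⟪v, run l x⟫ ≤ r := by
  induction l generalizing x with
  | nil => exact hvx
  | cons f l ih =>
    obtain ⟨hf, rfl⟩ := h f (by simp)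
    exact ih (fun g hg => h g (by simp [hg])) ((norm_push_le hf hr x).trans hx)
      (inner_push_le hf hr hρ hx hv hvx)

/-- After one round of collapses at level `r`, the point satisfies all constraints of the round. -/
lemma inner_run_le_of_mem {r ρ : ℝ} (hr : 0 ≤ r) (hρ : ρ ^ 2 ≤ 2 * r ^ 2)
    {l : List (Collapse E)} (h : ∀ f ∈ l, ‖f.dir‖ = 1 ∧ f.level = r) {x : E} (hx : ‖x‖ ≤ ρ)
    {f : Collapse E} (hfl : f ∈ l) : ⟪f.dir, run l x⟫ ≤ r := by
  induction l generalizing x with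
  | nil => simp at hfl
  | cons g l ih =>
    obtain ⟨hg, rfl⟩ := h g (by simp)
    have hl : ∀ f ∈ l, ‖f.dir‖ = 1 ∧ f.level = g.level := fun f hf => h f (by simp [hf])
    have hx' := (norm_push_le hg hr x).trans hx
    rcases List.mem_cons.1 hfl with rfl | hfl
    · refine inner_run_le hr hρ hl hx' hg ?_
      rcases le_total ⟪f.dir, x⟫ f.level with h | h
      · rwa [push_eq_self h]
      · exact (inner_push hg h).le
    · exact ih hl hx' hfl

lemma val_append (g : E → ℝ) (l₁ l₂ : List (Collapse E)) (x : E) :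
    val g (l₁ ++ l₂) x = val (val g l₂) l₁ x := by
  induction l₁ generalizing x with
  | nil => rfl
  | cons f l ih => simp [val, ih]

lemma continuous_val {g : E → ℝ} (hg : Continuous g) (l : List (Collapse E)) :
    Continuous (val g l) := by
  induction l with
  | nil => exact hg
  | cons f l ih =>
    have h1 : Continuous f.depth := by unfold depth; fun_prop
    have h2 : Continuous f.push := by unfold push; fun_prop
    exact (continuous_const.mul h1).add (ih.comp h2)

/-- First-order Taylor estimate with the derivative frozen at a nearby third point `z`. -/
lemma taylor_bound {φ : E → ℝ} {R D : ℝ}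
    (hφ : ∀ x ∈ Metric.ball (0 : E) R, DifferentiableAt ℝ φ x)
    (hL : ∀ x ∈ Metric.ball (0 : E) R, ∀ y ∈ Metric.ball (0 : E) R,
      ‖fderiv ℝ φ x - fderiv ℝ φ y‖ ≤ D * ‖x - y‖) (hD : 0 ≤ D)
    {x y z : E} {w : ℝ} (hx : ‖x‖ < R) (hy : ‖y‖ < R) (hz : ‖z‖ < R)
    (hxz : ‖x - z‖ ≤ w) (hyz : ‖y - z‖ ≤ w) :
    |φ y - φ x - fderiv ℝ φ z (y - x)| ≤ D * w * ‖y - x‖ := by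
  refine Convex.norm_image_sub_le_of_norm_hasFDerivWithin_le'
    (s := Metric.ball 0 R ∩ Metric.closedBall z w) (f' := fderiv ℝ φ) (𝕜 := ℝ)
    (fun v hv => (hφ v hv.1).hasFDerivAt.hasFDerivWithinAt) (fun v hv => ?_)
    ((convex_ball _ _).inter (convex_closedBall _ _)) ?_ ?_
  · refine (hL v hv.1 z (by simpa using hz)).trans ?_
    exact mul_le_mul_of_nonneg_left (by simpa [dist_eq_norm] using hv.2) hD
  · exact ⟨by simpa using hx, by simpa [dist_eq_norm] using hxz⟩
  · exact ⟨by simpa using hy, by simpa [dist_eq_norm] using hyz⟩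

/-- The error of one round: each collapse in direction `u` uses the derivative of `φ` along `u` at
the centre `r • u` of its cap as slope. -/
lemma round_error {φ : E → ℝ} {R D : ℝ}
    (hφ : ∀ x ∈ Metric.ball (0 : E) R, DifferentiableAt ℝ φ x)
    (hL : ∀ x ∈ Metric.ball (0 : E) R, ∀ y ∈ Metric.ball (0 : E) R,
      ‖fderiv ℝ φ x - fderiv ℝ φ y‖ ≤ D * ‖x - y‖) (hD : 0 ≤ D)
    {r ρ w : ℝ} (hr : 0 < r) (hrR : r < R) (hρ : ρ ^ 2 ≤ 2 * r ^ 2) (hw : 0 ≤ w)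
    (hρw : ρ ^ 2 - r ^ 2 ≤ w ^ 2) (g : E → ℝ) (us : List E) (hus : ∀ u ∈ us, ‖u‖ = 1)
    {x : E} (hx : ‖x‖ ≤ ρ) (hxR : ‖x‖ < R) :
    letI l : List (Collapse E) := us.map fun u => ⟨u, r, fderiv ℝ φ (r • u) u⟩
    |φ x - val g l x| ≤ Real.sqrt 2 * D * w * (‖x‖ - ‖run l x‖) + |φ (run l x) - g (run l x)| := by
  induction us generalizing x with
  | nil => simp [val, run]
  | cons u us ih =>
    have hu : ‖u‖ = 1 := hus u (by simp)
    set f : Collapse E := ⟨u, r, fderiv ℝ φ (r • u) u⟩ with hf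
    have hpush := norm_push_le (f := f) hu hr.le x
    have IH := ih (fun v hv => hus v (by simp [hv])) (hpush.trans hx) (hpush.trans_lt hxR)
    simp only [List.map_cons, ← hf, val, run]
    have hstep : |φ x - φ (f.push x) - f.slope * f.depth x| ≤
        Real.sqrt 2 * D * w * (‖x‖ - ‖f.push x‖) := by
      rcases le_total ⟪u, x⟫ r with h | h
      · have h0 : f.depth x = 0 := max_eq_right (by simp only [hf]; linarith)
        rw [push_eq_self h, h0]; simp
      · have h1 : |φ x - φ (f.push x) - fderiv ℝ φ (r • u) (x - f.push x)| ≤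
            D * w * ‖x - f.push x‖ := by
          refine taylor_bound hφ hL hD (hpush.trans_lt hxR) hxR ?_ ?_ ?_
          · rwa [norm_smul, hu, mul_one, Real.norm_of_nonneg hr.le]
          · exact norm_sub_center_le (f := f) hu hr.le hw hρw (hpush.trans hx)
              (inner_push (f := f) hu h).ge
          · exact norm_sub_center_le (f := f) hu hr.le hw hρw hx h
        have h2 : x - f.push x = f.depth x • u := by simp [push, hf]
        rw [h2, map_smul, norm_smul, hu, mul_one, Real.norm_of_nonneg (f.depth_nonneg x),
          smul_eq_mul, mul_comm (f.depth x)] at h1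
        have h3 := depth_le_sub (f := f) hu hr hρ hx
        have h4 := mul_le_mul_of_nonneg_left h3 (mul_nonneg hD hw)
        exact h1.trans (by linarith)
    rw [abs_le] at *
    constructor <;> linarith [hstep.1, hstep.2, IH.1, IH.2]

/-- Concentric rounds of collapses reach a ball of radius `√2 w`, on which the linearization of `φ`
at the origin is accurate enough. Each round uses a direction set `us` fine enough that it
decreases the squared radius by `w² / 2`. -/
lemma exists_list {φ : E → ℝ} {R D : ℝ}
    (hφ : ∀ x ∈ Metric.ball (0 : E) R, DifferentiableAt ℝ φ x)
    (hL : ∀ x ∈ Metric.ball (0 : E) R, ∀ y ∈ Metric.ball (0 : E) R,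
      ‖fderiv ℝ φ x - fderiv ℝ φ y‖ ≤ D * ‖x - y‖) (hD : 0 ≤ D)
    {w t : ℝ} (hw : 0 < w) (ht : 0 ≤ t) (us : List E) (hus : ∀ u ∈ us, ‖u‖ = 1)
    (hnet : ∀ z : E, z ≠ 0 → ∃ u ∈ us, (1 - t / 2) * ‖z‖ ≤ ⟪u, z⟫)
    (htw : 2 * R ^ 2 * t ≤ w ^ 2)
    (K : ℕ) (ρ : ℝ) (hρ0 : 0 ≤ ρ) (hρR : ρ ≤ R) (hρK : ρ ^ 2 ≤ 2 * w ^ 2 + K * (w ^ 2 / 2)) :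
    ∃ l : List (Collapse E), l.length ≤ K * us.length ∧ (∀ f ∈ l, ‖f.dir‖ = 1 ∧ 0 ≤ f.level) ∧
      ∀ x : E, ‖x‖ ≤ ρ → ‖x‖ < R →
        |φ x - val (fun x => φ 0 + fderiv ℝ φ 0 x) l x| ≤
          Real.sqrt 2 * D * w * ‖x‖ + Real.sqrt 2 * D * w * R := by
  have base : ∀ ρ : ℝ, 0 ≤ ρ → ρ ^ 2 ≤ 2 * w ^ 2 → ∀ x : E, ‖x‖ ≤ ρ → ‖x‖ < R →
      |φ x - (φ 0 + fderiv ℝ φ 0 x)| ≤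
        Real.sqrt 2 * D * w * ‖x‖ + Real.sqrt 2 * D * w * R := by
    intro ρ hρ0 h x hx hxR
    have h0 : ‖(0 : E)‖ < R := by simpa using (norm_nonneg x).trans_lt hxR
    have h1 := taylor_bound hφ hL hD h0 hxR h0 (w := ‖x‖) (by simp) (by simp)
    rw [sub_zero] at h1
    have h2 : ‖x‖ ≤ Real.sqrt 2 * w := by
      refine le_of_sq_le_sq ?_ (by positivity)
      rw [mul_pow, Real.sq_sqrt (by norm_num)]
      nlinarith [norm_nonneg x]
    have h3 : ‖x‖ * ‖x‖ ≤ (Real.sqrt 2 * w) * R := by gcongr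
    have h4 : 0 ≤ Real.sqrt 2 * D * w * ‖x‖ := by positivity
    have h5 := mul_le_mul_of_nonneg_left h3 hD
    rw [← sub_sub]
    linarith
  induction K generalizing ρ with
  | zero => exact ⟨[], by simp, by simp, base ρ hρ0 (by simpa using hρK)⟩
  | succ K ih =>
    rcases le_total (ρ ^ 2) (2 * w ^ 2) with h | h
    · exact ⟨[], by simp, by simp, base ρ hρ0 h⟩
    have hw2 : 0 < w ^ 2 := by positivity
    set r := Real.sqrt (ρ ^ 2 - w ^ 2) with hr_def
    have hr2 : r ^ 2 = ρ ^ 2 - w ^ 2 := Real.sq_sqrt (by linarith)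
    have hr : 0 < r := Real.sqrt_pos.2 (by linarith)
    have hrR : r < R := lt_of_pow_lt_pow_left₀ 2 (hρ0.trans hρR) (by nlinarith)
    set ρ' := Real.sqrt (ρ ^ 2 - w ^ 2 / 2) with hρ'_def
    have hρ'2 : ρ' ^ 2 = ρ ^ 2 - w ^ 2 / 2 := Real.sq_sqrt (by linarith)
    have hρ'0 : 0 ≤ ρ' := Real.sqrt_nonneg _
    have hρ'ρ : ρ' ≤ ρ := le_of_sq_le_sq (by linarith) hρ0
    obtain ⟨l₂, hlen, hl₂, herr⟩ := ih ρ' hρ'0 (hρ'ρ.trans hρR)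
      (by rw [hρ'2]; push_cast at hρK; linarith)
    set l₁ : List (Collapse E) := us.map fun u => ⟨u, r, fderiv ℝ φ (r • u) u⟩ with hl₁_def
    have hl₁ : ∀ f ∈ l₁, ‖f.dir‖ = 1 ∧ f.level = r := by
      intro f hf
      obtain ⟨u, hu, rfl⟩ := List.mem_map.1 hf
      exact ⟨hus u hu, rfl⟩
    have hl₁' : ∀ f ∈ l₁, ‖f.dir‖ = 1 ∧ 0 ≤ f.level :=
      fun f hf => ⟨(hl₁ f hf).1, (hl₁ f hf).2 ▸ hr.le⟩
    refine ⟨l₁ ++ l₂, ?_, ?_, fun x hx hxR => ?_⟩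
    · simp only [List.length_append, hl₁_def, List.length_map]
      linarith [Nat.succ_mul K us.length]
    · intro f hf
      rcases List.mem_append.1 hf with hf | hf
      · exact hl₁' f hf
      · exact hl₂ f hf
    · have hρr : ρ ^ 2 ≤ 2 * r ^ 2 := by rw [hr2]; linarith
      have hz := norm_run_le hl₁' x
      have hzρ' : ‖run l₁ x‖ ≤ ρ' := by
        rcases eq_or_ne (run l₁ x) 0 with h0 | h0
        · rw [h0, norm_zero]; exact hρ'0
        obtain ⟨u, hu, hnu⟩ := hnet _ h0
        have h1 : ⟪u, run l₁ x⟫ ≤ r := inner_run_le_of_mem hr.le hρr hl₁ hx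
          (f := ⟨u, r, fderiv ℝ φ (r • u) u⟩) (List.mem_map.2 ⟨u, hu, rfl⟩)
        have h2 := hnu.trans h1
        set a := ‖run l₁ x‖ with ha
        have ha0 : 0 ≤ a := norm_nonneg _
        have haρ : a ≤ ρ := hz.trans hx
        have hR2 : ρ ^ 2 ≤ R ^ 2 := by gcongr
        have ht1 : t ≤ 1 := by nlinarith
        have h3 : ((1 - t / 2) * a) ^ 2 ≤ r ^ 2 :=
          pow_le_pow_left₀ (mul_nonneg (by linarith) ha0) h2 2
        have h4 : a ^ 2 * t ≤ w ^ 2 / 2 := by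
          have : a ^ 2 ≤ R ^ 2 := le_trans (by gcongr) hR2
          nlinarith
        refine le_of_sq_le_sq ?_ hρ'0
        nlinarith [sq_nonneg (t * a)]
      have h1 := round_error hφ hL hD hr hrR hρr hw.le (by linarith)
        (val (fun x => φ 0 + fderiv ℝ φ 0 x) l₂) us hus hx hxR
      have h2 := herr _ hzρ' (hz.trans_lt hxR)
      rw [val_append]
      simp only [← hl₁_def] at h1
      linarith

end Inner

end Collapse

/-! ### A net of directions -/

/-- A net of unit vectors with `2 (n + 1) (m + 1) ^ n` elements, obtained by normalizing the points
of a regular grid on the `2 (n + 1)` facets of the cube `[-1, 1] ^ (n + 1)`. -/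
lemma exists_direction_net (n m : ℕ) (hm : 0 < m) :
    ∃ us : List (EuclideanSpace ℝ (Fin (n + 1))), us.length = 2 * (n + 1) * (m + 1) ^ n ∧
      (∀ u ∈ us, ‖u‖ = 1) ∧ ∀ z : EuclideanSpace ℝ (Fin (n + 1)), z ≠ 0 →
        ∃ u ∈ us, (1 - (n * (2 / m) ^ 2 : ℝ) / 2) * ‖z‖ ≤ ⟪u, z⟫ := by
  let grid : (Fin (n + 1) × Bool × (Fin n → Fin (m + 1))) → EuclideanSpace ℝ (Fin (n + 1)) :=
    fun q => WithLp.toLp 2 (q.1.insertNth (α := fun _ => ℝ) (if q.2.1 then 1 else -1)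
      (fun j => -1 + 2 * ((q.2.2 j : ℕ) : ℝ) / m))
  have hgrid : ∀ q, 1 ≤ ‖grid q‖ := by
    intro q
    have h := PiLp.norm_apply_le (grid q) q.1
    have h2 : ‖grid q q.1‖ = 1 := by
      simp only [grid, Fin.insertNth_apply_same]
      split_ifs <;> simp
    rwa [h2] at h
  have hmR : (0 : ℝ) < m := by exact_mod_cast hm
  refine ⟨(Finset.univ.toList).map fun q => ‖grid q‖⁻¹ • grid q, ?_, ?_, ?_⟩
  · simp [Fintype.card_prod]; ring
  · intro u hu
    obtain ⟨q, -, rfl⟩ := List.mem_map.1 hu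
    rw [norm_smul, norm_inv, norm_norm, inv_mul_cancel₀]
    linarith [hgrid q]
  · intro z hz
    obtain ⟨i, -, hi⟩ := Finset.exists_max_image Finset.univ (fun i => |z i|) Finset.univ_nonempty
    have hzi : 0 < |z i| := by
      rw [abs_pos]
      intro h0
      apply hz
      ext j
      have := hi j (Finset.mem_univ j)
      rw [h0, abs_zero] at this
      simpa using abs_nonpos_iff.1 this
    -- the radial projection of `z` to the boundary of the cube
    set p : EuclideanSpace ℝ (Fin (n + 1)) := |z i|⁻¹ • z with hp
    have hpj : ∀ j, |p j| ≤ 1 := by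
      intro j
      simp only [hp, PiLp.smul_apply, smul_eq_mul, abs_mul, abs_inv, abs_abs]
      rw [inv_mul_le_one₀ hzi]
      exact hi j (Finset.mem_univ j)
    have hpi : p i = if 0 < z i then 1 else -1 := by
      simp only [hp, PiLp.smul_apply, smul_eq_mul]
      split_ifs with h
      · rw [abs_of_pos h, inv_mul_cancel₀ h.ne']
      · have : z i < 0 := lt_of_le_of_ne (not_lt.1 h) (abs_pos.1 hzi)
        rw [abs_of_neg this, inv_neg, neg_mul, inv_mul_cancel₀ this.ne]
    have hp1 : 1 ≤ ‖p‖ := by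
      have h := PiLp.norm_apply_le p i
      have h2 : ‖p i‖ = 1 := by rw [hpi]; split_ifs <;> simp
      rwa [h2] at h
    have hk : ∀ j : Fin n, ∃ k : Fin (m + 1),
        |p (i.succAbove j) - (-1 + 2 * ((k : ℕ) : ℝ) / m)| ≤ 2 / m := by
      intro j
      have h1 := abs_le.1 (hpj (i.succAbove j))
      set s := p (i.succAbove j)
      have h0 : 0 ≤ (s + 1) * m / 2 := by
        have : 0 ≤ s + 1 := by linarith
        positivity
      have hf1 := Nat.floor_le h0
      have hf2 := Nat.lt_floor_add_one ((s + 1) * m / 2)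
      have hle : ⌊(s + 1) * m / 2⌋₊ ≤ m := by
        have : (⌊(s + 1) * m / 2⌋₊ : ℝ) ≤ m := by nlinarith
        exact_mod_cast this
      refine ⟨⟨⌊(s + 1) * m / 2⌋₊, by omega⟩, ?_⟩
      simp only
      set k : ℝ := (⌊(s + 1) * m / 2⌋₊ : ℝ)
      have : s - (-1 + 2 * k / m) = ((s + 1) * m / 2 - k) * (2 / m) := by
        field_simp; ring
      rw [this, abs_of_nonneg (mul_nonneg (by linarith) (by positivity))]
      have h3 : (s + 1) * m / 2 - k ≤ 1 := by linarith
      have h4 : (0 : ℝ) ≤ 2 / m := by positivity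
      nlinarith
    choose k hk using hk
    let q : Fin (n + 1) × Bool × (Fin n → Fin (m + 1)) := (i, decide (0 < z i), k)
    have hdist : ‖p - grid q‖ ^ 2 ≤ n * (2 / m) ^ 2 := by
      rw [EuclideanSpace.norm_sq_eq, Fin.sum_univ_succAbove _ i]
      have h0 : (p - grid q) i = 0 := by
        simp [grid, q, hpi]
      have h1 : ∀ j, ‖(p - grid q) (i.succAbove j)‖ ^ 2 ≤ (2 / m : ℝ) ^ 2 := by
        intro j
        have := hk j
        gcongr
        simpa [grid, q] using this
      rw [h0, norm_zero]
      have := Finset.sum_le_sum fun j (_ : j ∈ Finset.univ) => h1 j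
      simpa using this
    refine ⟨‖grid q‖⁻¹ • grid q,
      List.mem_map.2 ⟨q, Finset.mem_toList.2 (Finset.mem_univ q), rfl⟩, ?_⟩
    have hg := hgrid q
    have hzp : z = |z i| • p := by rw [hp, smul_smul, mul_inv_cancel₀ hzi.ne', one_smul]
    set T : ℝ := n * (2 / m) ^ 2
    have hT : 0 ≤ T := by positivity
    -- two points outside the unit ball at squared distance at most `T` subtend a small angle
    have hip : (1 - T / 2) * (‖p‖ * ‖grid q‖) ≤ ⟪grid q, p⟫ := by
      rw [norm_sub_sq_real, real_inner_comm] at hdist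
      nlinarith [sq_nonneg (‖p‖ - ‖grid q‖), mul_le_mul hp1 hg zero_le_one (by positivity)]
    have hgpos : 0 < ‖grid q‖ := by linarith
    rw [hzp, norm_smul, Real.norm_eq_abs, abs_abs, inner_smul_left, inner_smul_right,
      map_inv₀, RCLike.conj_to_real]
    have : (1 - T / 2) * ‖p‖ ≤ ‖grid q‖⁻¹ * ⟪grid q, p⟫ := by
      rw [inv_mul_eq_div, le_div_iff₀ hgpos]; linarith
    have := mul_le_mul_of_nonneg_left this hzi.le
    linarith

/-! ### Realization by layers of width `d + 1` -/

lemma iterComp_congr {α : Type*} {f g : ℕ → α → α} {N : ℕ} (h : ∀ k < N, f k = g k) :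
    iterComp f N = iterComp g N := by
  induction N with
  | zero => rfl
  | succ N ih =>
    funext x
    simp only [iterComp]
    rw [ih (fun k hk => h k (by omega)), h N (by omega)]

/-- A map `G` of `(x, y)` agrees, over the ball of radius `R`, with a width-`(d + 1)` network of
depth `N` followed by an affine map. -/
def Realizes {d : ℕ} (R : ℝ) (N : ℕ)
    (G : EuclideanSpace ℝ (Fin d) × ℝ → EuclideanSpace ℝ (Fin d) × ℝ) : Prop :=
  ∃ (A : ℕ → Matrix (Fin (d+1)) (Fin (d+1)) ℝ) (b : ℕ → Fin (d+1) → ℝ)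
    (B : (Fin (d+1) → ℝ) →ᵃ[ℝ] EuclideanSpace ℝ (Fin d) × ℝ),
    ∀ p : EuclideanSpace ℝ (Fin d) × ℝ, ‖p.1‖ < R →
      B (iterComp (fun k => reluLayer (A k) (b k)) N (Fin.snoc (fun i => p.1 i) p.2)) = G p

/-- The identification of `(x, y)` with the vector of inputs of the network. -/
noncomputable def snocEquiv (d : ℕ) :
    (EuclideanSpace ℝ (Fin d) × ℝ) ≃ₗ[ℝ] (Fin (d+1) → ℝ) where
  toFun p := Fin.snoc (α := fun _ => ℝ) (fun i => p.1 i) p.2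
  invFun z := (WithLp.toLp 2 fun i => z i.castSucc, z (Fin.last d))
  map_add' p q := by
    ext i; refine Fin.lastCases ?_ (fun j => ?_) i <;> simp
  map_smul' c p := by
    ext i; refine Fin.lastCases ?_ (fun j => ?_) i <;> simp
  left_inv p := by ext <;> simp
  right_inv z := by
    ext i; refine Fin.lastCases ?_ (fun j => ?_) i <;> simp

lemma realizes_id {d : ℕ} (R : ℝ) : Realizes (d := d) R 0 id :=
  ⟨fun _ => 0, fun _ => 0, (snocEquiv d).symm.toLinearMap.toAffineMap, fun p _ =>
    (snocEquiv d).symm_apply_apply p⟩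

/-- One more layer applies the ReLU in any prescribed linear coordinates `T`, shifted by `b`. The
affine map that follows the network is absorbed into the weights of the new layer. -/
lemma Realizes.layer {d : ℕ} {R : ℝ} {N : ℕ}
    {G G' : EuclideanSpace ℝ (Fin d) × ℝ → EuclideanSpace ℝ (Fin d) × ℝ} (h : Realizes R N G)
    (T : (EuclideanSpace ℝ (Fin d) × ℝ) ≃ₗ[ℝ] (Fin (d+1) → ℝ)) (b : Fin (d+1) → ℝ)
    (hG' : ∀ p, ‖p.1‖ < R → ∀ i, T (G' p) i = max (T (G p) i + b i) 0 - b i) :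
    Realizes R (N + 1) G' := by
  obtain ⟨A, β, B, hB⟩ := h
  let M : Matrix (Fin (d+1)) (Fin (d+1)) ℝ := LinearMap.toMatrix' (T.toLinearMap ∘ₗ B.linear)
  refine ⟨Function.update A N M, Function.update β N (T (B 0) + b),
    T.symm.toLinearMap.toAffineMap.comp (AffineMap.id ℝ _ - AffineMap.const ℝ _ b), ?_⟩
  intro p hp
  have hcongr : iterComp (fun k => reluLayer (Function.update A N M k)
      (Function.update β N (T (B 0) + b) k)) N = iterComp (fun k => reluLayer (A k) (β k)) N :=
    iterComp_congr fun k hk => by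
      rw [Function.update_of_ne hk.ne, Function.update_of_ne hk.ne]
  simp only [iterComp, hcongr, Function.update_self]
  have hBp := hB p hp
  set z := iterComp (fun k => reluLayer (A k) (β k)) N (Fin.snoc (fun i => p.1 i) p.2)
  have hdec : G p = B.linear z + B 0 := by rw [← hBp]; exact congrFun B.decomp z
  have key : reluLayer M (T (B 0) + b) z - b = T (G' p) := by
    funext i
    rw [hG' p hp i, hdec]
    simp only [reluLayer, M, LinearMap.toMatrix'_mulVec, Pi.sub_apply, Pi.add_apply, map_add,
      LinearMap.comp_apply, LinearEquiv.coe_coe]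
    rw [add_assoc]
  have : T.symm (reluLayer M (T (B 0) + b) z - b) = G' p := by rw [key, T.symm_apply_apply]
  simpa using this

/-- Linear coordinates adapted to the collapse `f`, where `p` is a pivot with `f.dir p ≠ 0`: the
coordinate `p` is `-⟪u, x⟫`, and the others are invariant under translation by `(u, c)`. -/
noncomputable def collapseCoord {d : ℕ} (f : Collapse (EuclideanSpace ℝ (Fin d))) (p : Fin d) :
    (EuclideanSpace ℝ (Fin d) × ℝ) →ₗ[ℝ] (Fin (d+1) → ℝ) where
  toFun q := Fin.snoc (α := fun _ => ℝ)
    (fun j => if j = p then -⟪f.dir, q.1⟫ else q.1 j - f.dir j / f.dir p * q.1 p)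
    (q.2 - f.slope / f.dir p * q.1 p)
  map_add' q q' := by
    ext i; refine Fin.lastCases ?_ (fun j => ?_) i
    · simp; ring
    · by_cases h : j = p
      · simp [h, inner_add_right]; ring
      · simp [h]; ring
  map_smul' c q := by
    ext i; refine Fin.lastCases ?_ (fun j => ?_) i
    · simp; ring
    · by_cases h : j = p
      · simp [h, inner_smul_right]
      · simp [h]; ring

lemma collapseCoord_injective {d : ℕ} {f : Collapse (EuclideanSpace ℝ (Fin d))}
    (hu : ‖f.dir‖ = 1) {p : Fin d} (hp : f.dir p ≠ 0) :
    Function.Injective (collapseCoord f p) := by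
  rw [← LinearMap.ker_eq_bot, LinearMap.ker_eq_bot']
  intro q hq
  have h1 : -⟪f.dir, q.1⟫ = 0 := by
    simpa [collapseCoord] using congrFun hq p.castSucc
  have h2 : ∀ j, q.1 j = f.dir j / f.dir p * q.1 p := by
    intro j
    by_cases h : j = p
    · subst h; field_simp
    · have := congrFun hq j.castSucc
      simp only [collapseCoord, LinearMap.coe_mk, AddHom.coe_mk, Fin.snoc_castSucc, h, if_false,
        Pi.zero_apply] at this
      linarith
  have h3 : q.2 = f.slope / f.dir p * q.1 p := by
    have := congrFun hq (Fin.last d)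
    simp only [collapseCoord, LinearMap.coe_mk, AddHom.coe_mk, Fin.snoc_last,
        Pi.zero_apply] at this
    linarith
  have h4 : q.1 = (q.1 p / f.dir p) • f.dir := by
    ext j
    rw [h2 j, PiLp.smul_apply, smul_eq_mul]; ring
  have h5 : q.1 p / f.dir p = 0 := by
    rw [h4, inner_smul_right, real_inner_self_eq_norm_sq, hu] at h1
    simpa using h1
  have h6 : q.1 p = 0 := by simpa [hp] using h5
  rw [h5, zero_smul] at h4
  rw [h6, mul_zero] at h3
  exact Prod.ext h4 h3

/-- A collapse costs one layer. Boundedness of `x` and a lower bound for `y` allow shifts that keep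
every neuron but the pivot in its linear regime. -/
lemma Realizes.collapse {d : ℕ} {R : ℝ} {N : ℕ}
    {G : EuclideanSpace ℝ (Fin d) × ℝ → EuclideanSpace ℝ (Fin d) × ℝ} (h : Realizes R N G)
    {f : Collapse (EuclideanSpace ℝ (Fin d))} (hu : ‖f.dir‖ = 1) {M : ℝ}
    (hb : ∀ p, ‖p.1‖ < R → ‖(G p).1‖ ≤ R ∧ -M ≤ (G p).2) :
    Realizes R (N + 1)
      (fun p => (f.push (G p).1, (G p).2 - f.slope * f.depth (G p).1)) := by
  obtain ⟨p, hp⟩ : ∃ p, f.dir p ≠ 0 := by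
    by_contra! h0
    have : f.dir = 0 := by ext j; exact h0 j
    rw [this, norm_zero] at hu
    exact zero_ne_one hu
  let T := LinearMap.linearEquivOfInjective (collapseCoord f p) (collapseCoord_injective hu hp)
    (snocEquiv d).finrank_eq
  refine h.layer T (Fin.snoc (α := fun _ => ℝ)
    (fun j => if j = p then f.level else R + |f.dir j / f.dir p| * R)
    (M + |f.slope / f.dir p| * R)) ?_
  intro q hq i
  obtain ⟨hx, hy⟩ := hb q hq
  set x := (G q).1
  set y := (G q).2
  have hxj : ∀ j, |x j| ≤ R := fun j => (PiLp.norm_apply_le x j).trans hx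
  have hbd : ∀ a : ℝ, a * x p ≤ |a| * R := fun a =>
    (le_abs_self _).trans (by rw [abs_mul]; exact mul_le_mul_of_nonneg_left (hxj p) (abs_nonneg a))
  simp only [T, LinearMap.linearEquivOfInjective_apply]
  refine Fin.lastCases ?_ (fun j => ?_) i
  · simp only [collapseCoord, LinearMap.coe_mk, AddHom.coe_mk, Fin.snoc_last]
    rw [max_eq_left]
    · simp only [Collapse.push, PiLp.sub_apply, PiLp.smul_apply, smul_eq_mul]
      field_simp
      ring
    · have := hbd (f.slope / f.dir p)
      linarith
  · by_cases hj : j = p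
    · simp only [collapseCoord, LinearMap.coe_mk, AddHom.coe_mk, Fin.snoc_castSucc, hj, if_true]
      simp only [Collapse.push, inner_sub_right, inner_smul_right, real_inner_self_eq_norm_sq, hu,
        Collapse.depth]
      rcases le_total ⟪f.dir, x⟫ f.level with h | h
      · rw [max_eq_right (by linarith), max_eq_left (by linarith)]; ring
      · rw [max_eq_left (by linarith), max_eq_right (by linarith)]; ring
    · simp only [collapseCoord, LinearMap.coe_mk, AddHom.coe_mk, Fin.snoc_castSucc, hj, if_false]
      rw [max_eq_left]
      · simp only [Collapse.push, PiLp.sub_apply, PiLp.smul_apply, smul_eq_mul]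
        field_simp
        ring
      · have := hbd (f.dir j / f.dir p)
        have := (abs_le.1 (hxj j)).1
        linarith

/-- Appending the collapses of a list: the `y`-component loses exactly what `Collapse.val` adds. -/
lemma Realizes.exists_run {d : ℕ} {R : ℝ} (g : EuclideanSpace ℝ (Fin d) → ℝ)
    (l : List (Collapse (EuclideanSpace ℝ (Fin d)))) (hl : ∀ f ∈ l, ‖f.dir‖ = 1 ∧ 0 ≤ f.level)
    {N : ℕ} {G : EuclideanSpace ℝ (Fin d) × ℝ → EuclideanSpace ℝ (Fin d) × ℝ}
    (h : Realizes R N G) {M : ℝ} (hb : ∀ p, ‖p.1‖ < R → ‖(G p).1‖ ≤ R ∧ -M ≤ (G p).2) :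
    ∃ G', Realizes R (N + l.length) G' ∧ ∀ p, ‖p.1‖ < R →
      (G' p).2 - g (G' p).1 = (G p).2 - Collapse.val g l (G p).1 := by
  induction l generalizing N G M with
  | nil => exact ⟨G, h, fun p _ => rfl⟩
  | cons f l ih =>
    obtain ⟨hu, hr⟩ := hl f (by simp)
    obtain ⟨G', hG', hval⟩ := ih (fun f hf => hl f (by simp [hf])) (h.collapse hu hb)
      (M := M + |f.slope| * R) (by
        intro p hp
        obtain ⟨hx, hy⟩ := hb p hp
        refine ⟨(Collapse.norm_push_le hu hr _).trans hx, ?_⟩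
        have h1 := (Collapse.depth_le_norm hu hr (G p).1).trans hx
        have h2 := mul_le_mul_of_nonneg_left h1 (abs_nonneg f.slope)
        have h3 := mul_le_mul_of_nonneg_right (le_abs_self f.slope) (f.depth_nonneg (G p).1)
        simp only
        linarith)
    refine ⟨G', ?_, fun p hp => ?_⟩
    · rw [List.length_cons, ← add_assoc, add_right_comm]; exact hG'
    · rw [hval p hp]
      simp only [Collapse.val]
      ring

lemma realizes_clip {d : ℕ} (R M : ℝ) :
    Realizes (d := d) R 1 (fun p => (p.1, max p.2 (-M))) := by
  refine (realizes_id R).layer (snocEquiv d)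
    (Fin.snoc (α := fun _ => ℝ) (fun _ => R) M) ?_
  intro p hp i
  refine Fin.lastCases ?_ (fun j => ?_) i
  · simp only [snocEquiv, LinearEquiv.coe_mk, LinearMap.coe_mk, AddHom.coe_mk, Fin.snoc_last, id]
    rw [← max_sub_sub_right]; simp
  · have h1 : |p.1 j| ≤ R := (PiLp.norm_apply_le p.1 j).trans hp.le
    have h2 := (abs_le.1 h1).1
    simp only [snocEquiv, LinearEquiv.coe_mk, LinearMap.coe_mk, AddHom.coe_mk,
      Fin.snoc_castSucc, id]
    rw [max_eq_left (by linarith)]; ring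

/-! ### Parameters and conclusion -/

lemma fderiv_lipschitz {E : Type*} [NormedAddCommGroup E] [NormedSpace ℝ E] {φ : E → ℝ} {R D : ℝ}
    (hφ : ContDiffOn ℝ 2 φ (Metric.ball 0 R))
    (hφD : ∀ x ∈ Metric.ball (0 : E) R,
      ‖iteratedFDerivWithin ℝ 2 φ (Metric.ball 0 R) x‖ ≤ D) :
    ∀ x ∈ Metric.ball (0 : E) R, ∀ y ∈ Metric.ball (0 : E) R,
      ‖fderiv ℝ φ x - fderiv ℝ φ y‖ ≤ D * ‖x - y‖ := by
  intro x hx y hy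
  refine (convex_ball (0 : E) R).norm_image_sub_le_of_norm_fderiv_le (𝕜 := ℝ) ?_ ?_ hy hx
  · intro z hz
    have h1 : ContDiffAt ℝ 2 φ z := hφ.contDiffAt (Metric.isOpen_ball.mem_nhds hz)
    exact (h1.fderiv_right (m := 1) (by norm_num)).differentiableAt (by norm_num)
  · intro z hz
    have := hφD z hz
    rwa [iteratedFDerivWithin_of_isOpen 2 Metric.isOpen_ball hz,
      show (2 : ℕ) = 1 + 1 from rfl, ← norm_iteratedFDeriv_fderiv, norm_iteratedFDeriv_one] at this

/-- The numerical core of the depth bound, with `ε = √(δ / R)`: `1 / ε²` rounds, each using a net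
of about `(1 / ε) ^ n` directions. -/
lemma depth_bound {n K m : ℕ} {ε : ℝ} (hε : 0 < ε) (hε1 : ε ≤ 1) (hK : (K : ℝ) ≤ 1 / ε ^ 2 + 1)
    (hm : (m : ℝ) ≤ 2 / ε + 1) :
    (1 + K * (2 * (n + 1) * (m + 1) ^ n) : ℝ) ≤ 14 / 3 * (n + 1) * (4 / ε) ^ (n + 2) := by
  have h1 : 1 ≤ 1 / ε := by rw [le_div_iff₀ hε]; linarith
  have h2 : 1 ≤ 1 / ε ^ 2 := by rw [← one_div_pow]; exact one_le_pow₀ h1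
  have hm' : (m + 1 : ℝ) ≤ 4 / ε := by
    rw [show 4 / ε = 2 / ε + 2 * (1 / ε) by ring]; linarith
  have hK' : (K : ℝ) ≤ 2 / ε ^ 2 := by
    rw [show 2 / ε ^ 2 = 1 / ε ^ 2 + 1 / ε ^ 2 by ring]; linarith
  have h3 : (K * (2 * (n + 1) * (m + 1) ^ n) : ℝ) ≤
      2 / ε ^ 2 * (2 * (n + 1) * (4 / ε) ^ n) := by gcongr
  have h4 : 2 / ε ^ 2 * (2 * (n + 1) * (4 / ε) ^ n) =
      (n + 1) / 4 * (4 / ε) ^ (n + 2) := by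
    rw [pow_add, div_pow 4 ε 2]; ring
  have h5 : 1 ≤ (4 / ε) ^ (n + 2) :=
    one_le_pow₀ (by rw [show 4 / ε = 4 * (1 / ε) by ring]; linarith)
  have h6 : (0 : ℝ) ≤ n * (4 / ε) ^ (n + 2) := by positivity
  rw [h4] at h3
  nlinarith

/-- A deep fully-connected ReLU network of width `d+1` and depth
`N ≤ (14/3)·d·(32R/δ)^((d+1)/2)` whose zero contour over `B_R^d × ℝ` is the graph of a
continuous function `φ̂` approximating `φ` to accuracy
`(7(1+√2)/√2)·D·(d−1)·R^(3/2)·δ^(1/2)`. -/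
theorem relu_network_implicit_approximation
    (d : ℕ) (hd : 2 ≤ d) (R D : ℝ) (hR : 0 < R) (hD : 0 ≤ D)
    (φ : EuclideanSpace ℝ (Fin d) → ℝ)
    (hφ : ContDiffOn ℝ 2 φ (Metric.ball 0 R))
    (hφD : ∀ x ∈ Metric.ball (0 : EuclideanSpace ℝ (Fin d)) R,
      ‖iteratedFDerivWithin ℝ 2 φ (Metric.ball 0 R) x‖ ≤ D)
    (δ : ℝ) (hδ0 : 0 < δ) (hδR : δ ≤ R * (1 - 1 / Real.sqrt 2)) :
    ∃ (N : ℕ) (A : ℕ → Matrix (Fin (d+1)) (Fin (d+1)) ℝ) (b : ℕ → Fin (d+1) → ℝ)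
      (L : (Fin (d+1) → ℝ) →ᵃ[ℝ] ℝ) (φhat : EuclideanSpace ℝ (Fin d) → ℝ),
      (N : ℝ) ≤ (14/3) * d * (32 * R / δ) ^ (((d : ℝ) + 1) / 2) ∧
      ContinuousOn φhat (Metric.ball 0 R) ∧
      {p : EuclideanSpace ℝ (Fin d) × ℝ |
          p.1 ∈ Metric.ball (0 : EuclideanSpace ℝ (Fin d)) R ∧
          L (iterComp (fun k => reluLayer (A k) (b k)) N (Fin.snoc (fun i => p.1 i) p.2)) = 0}
        = {p : EuclideanSpace ℝ (Fin d) × ℝ |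
            p.1 ∈ Metric.ball (0 : EuclideanSpace ℝ (Fin d)) R ∧ p.2 = φhat p.1} ∧
      ∀ x ∈ Metric.ball (0 : EuclideanSpace ℝ (Fin d)) R,
        |φ x - φhat x| ≤ (7 * (1 + Real.sqrt 2) / Real.sqrt 2) * D * ((d : ℝ) - 1) *
          R ^ ((3 : ℝ) / 2) * δ ^ ((1 : ℝ) / 2) := by
  obtain ⟨n, rfl⟩ : ∃ n, d = n + 1 := ⟨d - 1, by omega⟩
  have hn : (1 : ℝ) ≤ n := by exact_mod_cast (by omega : 1 ≤ n)
  have hδR' : δ ≤ R := hδR.trans (by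
    have : 0 ≤ 1 / Real.sqrt 2 := by positivity
    nlinarith)
  set ε := Real.sqrt (δ / R) with hε_def
  have hε : 0 < ε := Real.sqrt_pos.2 (by positivity)
  have hε2 : ε ^ 2 = δ / R := Real.sq_sqrt (by positivity)
  have hε1 : ε ≤ 1 := by
    rw [hε_def, Real.sqrt_le_left (by norm_num), one_pow, div_le_one hR]; exact hδR'
  -- `w` is the radius of the caps, `m` the resolution of the direction net, `K` the round count
  set w := 2 * n * ε * R with hw_def
  have hw : 0 < w := by positivity
  set m := ⌈2 / ε⌉₊ with hm_def
  set K := ⌈1 / ε ^ 2⌉₊ with hK_def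
  have hm_ge : 2 / ε ≤ m := Nat.le_ceil _
  have hm : 0 < m := Nat.ceil_pos.2 (by positivity)
  have hm_le : (m : ℝ) ≤ 2 / ε + 1 := (Nat.ceil_lt_add_one (by positivity)).le
  have hK_ge : 1 / ε ^ 2 ≤ K := Nat.le_ceil _
  have hK_le : (K : ℝ) ≤ 1 / ε ^ 2 + 1 := (Nat.ceil_lt_add_one (by positivity)).le
  have hmR : (0 : ℝ) < m := by exact_mod_cast hm
  have hdiff : ∀ x ∈ Metric.ball (0 : EuclideanSpace ℝ (Fin (n + 1))) R,
      DifferentiableAt ℝ φ x := fun x hx =>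
    (hφ.contDiffAt (Metric.isOpen_ball.mem_nhds hx)).differentiableAt (by norm_num)
  have hL := fderiv_lipschitz hφ hφD
  obtain ⟨us, hlen, hus, hnet⟩ := exists_direction_net n m hm
  have htw : 2 * R ^ 2 * (n * (2 / m) ^ 2 : ℝ) ≤ w ^ 2 := by
    have h1 : (2 / m : ℝ) ≤ ε := by
      rw [div_le_iff₀ hε] at hm_ge
      rw [div_le_iff₀ hmR]; linarith
    have h2 : (2 / m : ℝ) ^ 2 ≤ ε ^ 2 := by gcongr
    calc 2 * R ^ 2 * (n * (2 / m) ^ 2 : ℝ) ≤ 2 * R ^ 2 * (n * ε ^ 2) := by gcongr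
      _ = (2 * n) * (R ^ 2 * ε ^ 2) := by ring
      _ ≤ (4 * n ^ 2) * (R ^ 2 * ε ^ 2) := by
        have : (2 * n : ℝ) ≤ 4 * n ^ 2 := by nlinarith
        gcongr
      _ = w ^ 2 := by rw [hw_def]; ring
  have hRK : R ^ 2 ≤ 2 * w ^ 2 + K * (w ^ 2 / 2) := by
    have h1 : 1 / ε ^ 2 * (w ^ 2 / 2) ≤ K * (w ^ 2 / 2) := by gcongr
    have h2 : 1 / ε ^ 2 * (w ^ 2 / 2) = 2 * n ^ 2 * R ^ 2 := by
      rw [hw_def]; field_simp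
    have h3 : (1 : ℝ) ≤ n ^ 2 := one_le_pow₀ hn
    nlinarith [sq_nonneg R, sq_nonneg w]
  obtain ⟨l, hl_len, hl, herr⟩ := Collapse.exists_list hdiff hL hD hw
    (t := n * (2 / m) ^ 2) (by positivity) us hus hnet htw K R hR.le le_rfl hRK
  set g : EuclideanSpace ℝ (Fin (n + 1)) → ℝ := fun x => φ 0 + fderiv ℝ φ 0 x with hg_def
  have hcont : Continuous (Collapse.val g l) :=
    Collapse.continuous_val (by rw [hg_def]; fun_prop) l
  obtain ⟨C, hC⟩ := (isCompact_closedBall (0 : EuclideanSpace ℝ (Fin (n + 1))) R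
    ).exists_bound_of_continuousOn hcont.continuousOn
  -- clip `y` strictly below the range of the approximant, so that the zero set is unaffected
  obtain ⟨G, ⟨A, b, B, hB⟩, hGval⟩ := (realizes_clip R (C + 1)).exists_run g l hl
    (M := C + 1) (fun p hp => ⟨hp.le, le_max_right _ _⟩)
  let Lin : EuclideanSpace ℝ (Fin (n + 1)) × ℝ →ₗ[ℝ] ℝ :=
    LinearMap.snd ℝ _ _ - (fderiv ℝ φ 0).toLinearMap ∘ₗ LinearMap.fst ℝ _ _
  let L : EuclideanSpace ℝ (Fin (n + 1)) × ℝ →ᵃ[ℝ] ℝ :=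
    Lin.toAffineMap - AffineMap.const ℝ _ (φ 0)
  have hLin : ∀ q, L q = q.2 - g q.1 := by
    intro q
    simp [L, Lin, hg_def]; ring
  refine ⟨1 + l.length, A, b, L.comp B, Collapse.val g l, ?_, hcont.continuousOn, ?_, ?_⟩
  · have h1 : ((1 + l.length : ℕ) : ℝ) ≤ 1 + K * (2 * (n + 1) * (m + 1) ^ n) := by
      rw [hlen] at hl_len
      exact_mod_cast Nat.add_le_add_left hl_len 1
    refine h1.trans ((depth_bound hε hε1 hK_le hm_le).trans ?_)
    push_cast
    gcongr
    have h2 : (4 / ε) ^ 2 ≤ 32 * R / δ := by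
      rw [div_pow, hε2, div_div_eq_mul_div]; gcongr; norm_num
    calc (4 / ε) ^ (n + 2) = ((4 / ε) ^ 2) ^ (((n : ℝ) + 1 + 1) / 2) := by
          rw [← Real.rpow_natCast, ← Real.rpow_natCast, ← Real.rpow_mul (by positivity)]
          congr 1; push_cast; ring
      _ ≤ (32 * R / δ) ^ (((n : ℝ) + 1 + 1) / 2) := by gcongr
  · ext p
    simp only [Set.mem_ofPred_eq, and_congr_right_iff]
    intro hp
    have hp' : ‖p.1‖ < R := by simpa using hp
    rw [AffineMap.comp_apply, hB p hp', hLin, hGval p hp']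
    have h1 := (abs_le.1 (hC p.1 (by simpa using hp'.le))).1
    simp only
    rcases le_total p.2 (-(C + 1)) with h | h
    · rw [max_eq_right h]
      constructor <;> intro h2 <;> linarith
    · rw [max_eq_left h, sub_eq_zero]
  · intro x hx
    have hx' : ‖x‖ < R := by simpa using hx
    refine (herr x hx'.le hx').trans ?_
    have h1 : R ^ ((3 : ℝ) / 2) * δ ^ ((1 : ℝ) / 2) = ε * R ^ 2 := by
      have hδ : δ = ε ^ 2 * R := by rw [hε2]; field_simp
      rw [hδ, Real.mul_rpow (by positivity) hR.le, ← Real.rpow_natCast ε 2,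
        ← Real.rpow_mul hε.le, mul_left_comm, ← Real.rpow_add hR, ← Real.rpow_natCast R 2]
      norm_num
    have hs : Real.sqrt 2 * Real.sqrt 2 = 2 := Real.mul_self_sqrt (by norm_num)
    have hs0 : 0 < Real.sqrt 2 := by positivity
    have h2 : 4 * Real.sqrt 2 ≤ 7 * (1 + Real.sqrt 2) / Real.sqrt 2 := by
      rw [le_div_iff₀ hs0]; nlinarith
    have h3 : 0 ≤ D * n * (ε * R ^ 2) := by positivity
    calc Real.sqrt 2 * D * w * ‖x‖ + Real.sqrt 2 * D * w * R
        ≤ Real.sqrt 2 * D * w * R + Real.sqrt 2 * D * w * R := by gcongr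
      _ = 4 * Real.sqrt 2 * (D * n * (ε * R ^ 2)) := by rw [hw_def]; ring
      _ ≤ 7 * (1 + Real.sqrt 2) / Real.sqrt 2 * (D * n * (ε * R ^ 2)) := by gcongr
      _ = _ := by rw [mul_assoc _ (R ^ ((3 : ℝ) / 2)), h1]; push_cast; ring
end

section
/- Single-projection estimate: let d ≥ 2, 0 < δ < r < R, D ≥ 0, and let φ : B_R^d → ℝ be a C² function whose second derivative has operator norm at most D at every point. Let β ∈ ℝ^d be a unit vector, set p = −(r−δ)β, and let x ∈ ℝ^d satisfy ‖x‖ ≤ r and ⟪β,x⟫ + (r−δ) ≤ 0. Put t = −(⟪β,x⟫ + (r−δ)) (the distance from x to the hyperplane {z : ⟪β,z⟫ + (r−δ) = 0}). Then |φ(x) + t·⟪β, ∇φ(p)⟫ − φ(x + tβ)| ≤ (3D/√2)·(d−1)·√r·δ^(1/2)·t. -/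
open scoped RealInnerProductSpace

/-!
On the segment from `x` to `x + t • β` the derivative of `φ` differs from its value at `p` by at
most `D` times the distance to `p`, because a bound on the second derivative is a Lipschitz bound
on the first. Every point of the cap is within `√(2rδ)` of `p`: indeed
`‖x - p‖² = ‖x‖² + 2(r-δ)⟪β, x⟫ + (r-δ)² ≤ r² - (r-δ)² ≤ 2rδ`, and moving to the foot `x + t • β`
of the perpendicular only decreases this distance. The mean value inequality then bounds the offset
by `D √(2rδ) t`, which is enough since `√2 ≤ 3/√2` and `d - 1 ≥ 1`.
-/

/-- First-order Taylor estimate with the derivative frozen at a nearby point `p`: if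
`‖D²f‖ ≤ D` on a ball and `x`, `y` are within `ρ` of `p`, the error is at most `D ρ ‖y - x‖`. -/
lemma norm_sub_sub_fderiv_le {E : Type*} [NormedAddCommGroup E] [NormedSpace ℝ E]
    {f : E → ℝ} {R D ρ : ℝ} (hD : 0 ≤ D) (hf : ContDiffOn ℝ 2 f (Metric.ball 0 R))
    (hfD : ∀ z ∈ Metric.ball (0 : E) R,
      ‖iteratedFDerivWithin ℝ 2 f (Metric.ball 0 R) z‖ ≤ D)
    {p x y : E} (hp : p ∈ Metric.ball 0 R) (hx : x ∈ Metric.ball 0 R) (hy : y ∈ Metric.ball 0 R)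
    (hxp : ‖x - p‖ ≤ ρ) (hyp : ‖y - p‖ ≤ ρ) :
    ‖f y - f x - fderiv ℝ f p (y - x)‖ ≤ D * ρ * ‖y - x‖ := by
  have ho : IsOpen (Metric.ball (0 : E) R) := Metric.isOpen_ball
  have hu := ho.uniqueDiffOn (𝕜 := ℝ)
  have hd' : DifferentiableOn ℝ (fderivWithin ℝ f (Metric.ball 0 R)) (Metric.ball 0 R) :=
    (hf.fderivWithin hu (m := 1) (by norm_num)).differentiableOn (by norm_num)
  have hlip : ∀ z ∈ Metric.ball (0 : E) R, ‖fderiv ℝ f z - fderiv ℝ f p‖ ≤ D * ‖z - p‖ := by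
    intro z hz
    rw [← fderivWithin_of_isOpen ho hz, ← fderivWithin_of_isOpen ho hp]
    refine (convex_ball (0 : E) R).norm_image_sub_le_of_norm_fderivWithin_le hd' ?_ hp hz
    intro w hw
    rw [← norm_iteratedFDerivWithin_one _ (hu w hw), norm_iteratedFDerivWithin_fderivWithin hu hw]
    exact hfD w hw
  have hconv : Convex ℝ (Metric.ball (0 : E) R ∩ Metric.closedBall p ρ) :=
    (convex_ball _ _).inter (convex_closedBall _ _)
  refine hconv.norm_image_sub_le_of_norm_fderiv_le' (𝕜 := ℝ) ?_ ?_
    ⟨hx, by simpa [dist_eq_norm] using hxp⟩ ⟨hy, by simpa [dist_eq_norm] using hyp⟩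
  · intro z hz
    exact (hf.contDiffAt (ho.mem_nhds hz.1)).differentiableAt (by norm_num)
  · intro z hz
    have hzp : ‖z - p‖ ≤ ρ := by simpa [dist_eq_norm] using hz.2
    exact (hlip z hz.1).trans (by gcongr)

/-- **Single-projection estimate.** For a `C²` function `φ` on `B_R^d` with second
derivative bounded by `D`, projecting a point `x` of the spherical cap cut from `B̄_r^d` by the
hyperplane tangent to `B̄_{r−δ}^d` at `p`, along the direction `(β, ⟪β,∇φ(p)⟫)`, produces an
offset from the graph of at most `(3D/√2)·(d−1)·√r·δ^(1/2)·t`. -/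
theorem single_projection_estimate
    (d : ℕ) (hd : 2 ≤ d) (δ r R D : ℝ) (hδ : 0 < δ) (hδr : δ < r) (hrR : r < R) (hD : 0 ≤ D)
    (φ : EuclideanSpace ℝ (Fin d) → ℝ)
    (hφ : ContDiffOn ℝ 2 φ (Metric.ball 0 R))
    (hφD : ∀ z ∈ Metric.ball (0 : EuclideanSpace ℝ (Fin d)) R,
      ‖iteratedFDerivWithin ℝ 2 φ (Metric.ball 0 R) z‖ ≤ D)
    (β : EuclideanSpace ℝ (Fin d)) (hβ : ‖β‖ = 1)
    (p : EuclideanSpace ℝ (Fin d)) (hp : p = -(r - δ) • β)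
    (x : EuclideanSpace ℝ (Fin d)) (hx : ‖x‖ ≤ r) (hxU : ⟪β, x⟫ + (r - δ) ≤ 0)
    (t : ℝ) (ht : t = -(⟪β, x⟫ + (r - δ))) :
    |φ x + t * ⟪β, gradient φ p⟫ - φ (x + t • β)|
      ≤ (3 * D / Real.sqrt 2) * ((d : ℝ) - 1) * Real.sqrt r * δ ^ ((1 : ℝ) / 2) * t := by
  have ht0 : 0 ≤ t := by linarith
  have hβx : ⟪β, x⟫ = -t - (r - δ) := by linarith
  have hpn : ‖p‖ = r - δ := by
    rw [hp, norm_smul, hβ, norm_neg, Real.norm_of_nonneg (by linarith), mul_one]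
  have hxsq : ‖x‖ ^ 2 ≤ r ^ 2 := by gcongr
  have hxp : ‖x - p‖ ^ 2 ≤ 2 * r * δ := by
    have h : ‖x - p‖ ^ 2 = ‖x‖ ^ 2 + 2 * (r - δ) * ⟪β, x⟫ + (r - δ) ^ 2 := by
      rw [norm_sub_sq_real, hpn, hp, inner_smul_right, real_inner_comm]
      ring
    rw [h, hβx]
    nlinarith [mul_nonneg ht0 (sub_nonneg.2 hδr.le), sq_nonneg δ]
  have hyp : ‖x + t • β - p‖ ^ 2 ≤ 2 * r * δ := by
    have h : ‖x + t • β - p‖ ^ 2 = ‖x - p‖ ^ 2 - t ^ 2 := by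
      rw [show x + t • β - p = (x - p) + t • β by abel, norm_add_sq_real, norm_smul, hβ,
        inner_smul_right, inner_sub_left, hp, inner_smul_left, real_inner_self_eq_norm_sq, hβ,
        real_inner_comm, hβx, Real.norm_of_nonneg ht0]
      simp only [conj_trivial]
      ring
    nlinarith [sq_nonneg t]
  have hy : ‖x + t • β‖ ≤ r := by
    have h : ‖x + t • β‖ ^ 2 = ‖x‖ ^ 2 - t ^ 2 - 2 * (t * (r - δ)) := by
      rw [norm_add_sq_real, norm_smul, hβ, inner_smul_right, real_inner_comm, hβx,
        Real.norm_of_nonneg ht0]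
      ring
    refine le_of_sq_le_sq ?_ (by linarith)
    nlinarith [mul_nonneg ht0 (sub_nonneg.2 hδr.le), sq_nonneg t]
  have key := norm_sub_sub_fderiv_le hD hφ hφD (p := p) (x := x) (y := x + t • β)
    (ρ := √(2 * r * δ)) (by simp; linarith) (by simp; linarith) (by simp; linarith)
    (Real.le_sqrt_of_sq_le hxp) (Real.le_sqrt_of_sq_le hyp)
  have hgrad : ⟪β, gradient φ p⟫ = fderiv ℝ φ p β := by
    rw [real_inner_comm, gradient, InnerProductSpace.toDual_symm_apply]
  rw [add_sub_cancel_left, map_smul, norm_smul, hβ, Real.norm_of_nonneg ht0, mul_one,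
    smul_eq_mul, ← hgrad, Real.norm_eq_abs] at key
  rw [abs_sub_comm, ← sub_sub]
  refine key.trans ?_
  have hsqrt : √(2 * r * δ) = √2 * (√r * √δ) := by
    rw [mul_assoc, Real.sqrt_mul (by norm_num), Real.sqrt_mul (by linarith)]
  have h2 : √2 ≤ 3 / √2 := by
    rw [le_div_iff₀ (by positivity), Real.mul_self_sqrt (by norm_num)]
    norm_num
  have hd1 : (1 : ℝ) ≤ (d : ℝ) - 1 := by
    have : (2 : ℝ) ≤ d := by exact_mod_cast hd
    linarith
  rw [hsqrt, ← Real.sqrt_eq_rpow]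
  calc D * (√2 * (√r * √δ)) * t = (√2 * 1) * (D * √r * √δ * t) := by ring
    _ ≤ (3 / √2 * ((d : ℝ) - 1)) * (D * √r * √δ * t) := by gcongr
    _ = _ := by ring
end

section
/- Intersecting tangent hyperplanes: let d ≥ 1, 0 < δ < r, and let β_j, β_i ∈ ℝ^d be unit vectors. If there exists a point x ∈ ℝ^d with ‖x‖ ≤ r, ⟪β_j, x⟫ = −(r−δ) and ⟪β_i, x⟫ = −(r−δ) (i.e., the two hyperplanes {z : ⟪β_j,z⟫ + (r−δ) = 0} and {z : ⟪β_i,z⟫ + (r−δ) = 0} intersect inside the closed ball of radius r), then ⟪β_j, β_i⟫ ≥ (r² − 4rδ + 2δ²)/r², equivalently 2(r−δ)² ≤ r²(1 + ⟪β_j, β_i⟫). -/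
open scoped RealInnerProductSpace

/-- **Intersecting tangent hyperplanes.** If the two hyperplanes
`{z : ⟪β_j,z⟫ + (r−δ) = 0}` and `{z : ⟪β_i,z⟫ + (r−δ) = 0}`, tangent to the ball of radius
`r−δ`, intersect inside the closed ball of radius `r`, then
`⟪β_j,β_i⟫ ≥ (r² − 4rδ + 2δ²)/r²`, equivalently `2(r−δ)² ≤ r²(1 + ⟪β_j,β_i⟫)`. -/
theorem intersecting_tangent_hyperplanes
    (d : ℕ) (hd : 1 ≤ d) (r δ : ℝ) (hδ : 0 < δ) (hδr : δ < r)
    (βj βi : EuclideanSpace ℝ (Fin d)) (hβj : ‖βj‖ = 1) (hβi : ‖βi‖ = 1)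
    (x : EuclideanSpace ℝ (Fin d)) (hx : ‖x‖ ≤ r)
    (hxj : ⟪βj, x⟫ = -(r - δ)) (hxi : ⟪βi, x⟫ = -(r - δ)) :
    (r ^ 2 - 4 * r * δ + 2 * δ ^ 2) / r ^ 2 ≤ ⟪βj, βi⟫ ∧
    2 * (r - δ) ^ 2 ≤ r ^ 2 * (1 + ⟪βj, βi⟫) := by
  -- Cauchy–Schwarz for `βj + βi` and `x`: the inner product is `-2(r - δ)`, and
  -- `‖βj + βi‖² = 2(1 + ⟪βj, βi⟫)` since both vectors are unit.
  have hcs : |⟪βj + βi, x⟫| ≤ ‖βj + βi‖ * r :=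
    (abs_real_inner_le_norm _ _).trans (by gcongr)
  have hsq : ⟪βj + βi, x⟫ ^ 2 ≤ ‖βj + βi‖ ^ 2 * r ^ 2 := by
    rw [← mul_pow, ← sq_abs]
    gcongr
  rw [inner_add_left, hxj, hxi, norm_add_sq_real, hβj, hβi] at hsq
  have key : 2 * (r - δ) ^ 2 ≤ r ^ 2 * (1 + ⟪βj, βi⟫) := by linarith
  have hr : 0 < r := hδ.trans hδr
  refine ⟨?_, key⟩
  rw [div_le_iff₀ (by positivity)]
  linarith
end

section
/- δ-condition: let d ≥ 1, r > 0 and 0 < δ ≤ r(1 − 1/√2). Let β_1, …, β_m ∈ ℝ^d be unit vectors, let U_i = {x ∈ ℝ^d : ⟪β_i,x⟫ + (r−δ) ≥ 0}, and let 𝒫 = ∩_{i=1}^m U_i. Assume the closed ball B̄_{r−δ}^d is contained in 𝒫 and 𝒫 is contained in the closed ball B̄_r^d. Given x_0 ∈ B̄_r^d \ 𝒫, define recursively x_i = x_{i−1} + t_i β_i with t_i = max(0, −(⟪β_i, x_{i−1}⟫ + (r−δ))) for i = 1, …, m. Then x_m lies in the topological boundary ∂𝒫 of 𝒫. -/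
/-!
Put `s = r - δ`, so that the hypothesis on `δ` gives `s > 0` and `r² ≤ 2s²`. Each step projects
`x i` onto the half-space `{y | -s ≤ ⟪β i, y⟫}`, which contains the origin, so the norm never
increases and the trajectory stays in the ball of radius `r` (`norm_sq_step_le`).

A step never destroys a constraint that already holds (`constraint_preserved`). If the step along
`b` destroyed the constraint of `a`, then `⟪a, b⟫ < 0`, and the new point `y` would satisfy
`⟪b, y⟫ = -s` and `⟪a, y⟫ < -s`. Since `a` and `b` form an obtuse angle, this forces
`‖y‖² > 2s² ≥ r²`, contradicting the norm bound. Hence the endpoint satisfies all constraints.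
Since `x 0 ∉ 𝒫`, some step moves the point, and the last such step leaves its constraint tight, so
the endpoint lies on a facet hyperplane and therefore on the frontier.
-/

open scoped RealInnerProductSpace

section Steps

variable {E : Type*} [NormedAddCommGroup E] [InnerProductSpace ℝ E]

/-- Projecting `x` onto the half-space `{y | -s ≤ ⟪b, y⟫}`, with `s ≥ 0`, does not increase the
norm; here `t` is the (nonnegative) distance from `x` to that half-space. -/
lemma norm_sq_step_le {b x : E} {s t : ℝ} (hb : ‖b‖ = 1) (hs : 0 ≤ s) (ht : 0 ≤ t)
    (hbx : ⟪b, x⟫ = -s - t) : ‖x + t • b‖ ^ 2 ≤ ‖x‖ ^ 2 := by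
  rw [norm_add_sq_real, inner_smul_right, real_inner_comm, hbx, norm_smul, hb, mul_one,
    Real.norm_eq_abs, sq_abs]
  nlinarith [mul_nonneg ht hs, sq_nonneg t]

/-- Two unit vectors at an obtuse angle whose inner products with `y` are at most `-s`, one of
them strictly, force `‖y‖² > 2s²`. -/
lemma two_mul_sq_lt_norm_sq {a b y : E} {s : ℝ} (ha : ‖a‖ = 1) (hb : ‖b‖ = 1) (hs : 0 < s)
    (hab : ⟪a, b⟫ ≤ 0) (hby : ⟪b, y⟫ = -s) (hay : ⟪a, y⟫ < -s) : 2 * s ^ 2 < ‖y‖ ^ 2 := by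
  obtain ⟨u, hu⟩ : ∃ u, u = -⟪a, y⟫ := ⟨_, rfl⟩
  have hay' : ⟪a, y⟫ = -u := by linarith
  have hus : s < u := by linarith
  -- For orthogonal `a`, `b`, the vector `-(u • a + s • b)` is the projection of `y` onto their span.
  have h : 0 ≤ ‖y + (u • a + s • b)‖ ^ 2 := sq_nonneg _
  rw [norm_add_sq_real, norm_add_sq_real, inner_add_right, inner_smul_right, inner_smul_right,
    inner_smul_left, inner_smul_right, real_inner_comm a y, real_inner_comm b y, hay', hby,
    norm_smul, norm_smul, ha, hb, mul_one, mul_one, Real.norm_eq_abs, Real.norm_eq_abs, sq_abs,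
    sq_abs] at h
  simp only [conj_trivial] at h
  have h2 : u * (s * ⟪a, b⟫) ≤ 0 :=
    mul_nonpos_of_nonneg_of_nonpos (by linarith) (mul_nonpos_of_nonneg_of_nonpos hs.le hab)
  nlinarith

/-- A projection step along `b` keeps the constraint of `a`, as long as the new point stays in a
ball of radius at most `√2 * s`. -/
lemma constraint_preserved {a b x : E} {s t : ℝ} (ha : ‖a‖ = 1) (hb : ‖b‖ = 1) (hs : 0 < s)
    (ht : 0 ≤ t) (hbx : ⟪b, x⟫ = -s - t) (hax : -s ≤ ⟪a, x⟫)
    (hy : ‖x + t • b‖ ^ 2 ≤ 2 * s ^ 2) : -s ≤ ⟪a, x + t • b⟫ := by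
  by_contra! hlt
  have hab : ⟪a, b⟫ ≤ 0 := by
    by_contra! hpos
    rw [inner_add_right, inner_smul_right] at hlt
    nlinarith [mul_nonneg ht hpos.le]
  have hby : ⟪b, x + t • b⟫ = -s := by
    rw [inner_add_right, inner_smul_right, real_inner_self_eq_norm_sq, hb, hbx]
    ring
  exact absurd (two_mul_sq_lt_norm_sq ha hb hs hab hby hlt) (not_lt.mpr hy)

/-- A set contained in the half-space `{z | -s ≤ ⟪b, z⟫}` has no interior point on the bounding
hyperplane. -/
lemma notMem_interior_of_inner_eq {P : Set E} {b y : E} {s : ℝ} (hb : ‖b‖ = 1)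
    (hP : ∀ z ∈ P, -s ≤ ⟪b, z⟫) (hy : ⟪b, y⟫ = -s) : y ∉ interior P := by
  intro hint
  obtain ⟨ε, hε, hball⟩ := Metric.mem_nhds_iff.mp (mem_interior_iff_mem_nhds.mp hint)
  have hz : y - (ε / 2) • b ∈ Metric.ball y ε := by
    rw [Metric.mem_ball, dist_eq_norm, sub_sub_cancel_left, norm_neg, norm_smul, hb, mul_one,
      Real.norm_eq_abs, abs_of_pos (half_pos hε)]
    exact half_lt_self hε
  have h := hP _ (hball hz)
  rw [inner_sub_right, inner_smul_right, real_inner_self_eq_norm_sq, hb, hy] at h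
  linarith

end Steps

/-- The condition on `δ` says that `r - δ ≥ r / √2`. -/
lemma pos_and_sq_le_of_delta {r δ : ℝ} (hr : 0 < r) (hδr : δ ≤ r * (1 - 1 / Real.sqrt 2)) :
    0 < r - δ ∧ r ^ 2 ≤ 2 * (r - δ) ^ 2 := by
  have h2 : (0 : ℝ) < Real.sqrt 2 := by positivity
  have hle : r / Real.sqrt 2 ≤ r - δ := by
    have : r * (1 - 1 / Real.sqrt 2) = r - r / Real.sqrt 2 := by ring
    linarith
  have hpos : 0 < r / Real.sqrt 2 := by positivity
  refine ⟨by linarith, ?_⟩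
  have hsq : (r / Real.sqrt 2) ^ 2 = r ^ 2 / 2 := by
    rw [div_pow, Real.sq_sqrt (by norm_num)]
  nlinarith [pow_le_pow_left₀ hpos.le hle 2]

/-- **δ-condition.** If `0 < δ ≤ r(1 − 1/√2)` and the convex polytope
`𝒫 = ∩_i {x : ⟪β_i,x⟫ + (r−δ) ≥ 0}` satisfies `B̄_{r−δ}^d ⊆ 𝒫 ⊆ B̄_r^d`, then the trajectory
`x_i = x_{i−1} + t_i β_i`, `t_i = max(0, −(⟪β_i,x_{i−1}⟫ + (r−δ)))`, starting from any
`x_0 ∈ B̄_r^d \ 𝒫`, ends on the topological boundary of `𝒫`. -/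
theorem delta_condition_endpoint_on_boundary
    (d : ℕ) (hd : 1 ≤ d) (r δ : ℝ) (hr : 0 < r) (hδ : 0 < δ)
    (hδr : δ ≤ r * (1 - 1 / Real.sqrt 2))
    (m : ℕ) (β : ℕ → EuclideanSpace ℝ (Fin d)) (hβ : ∀ i < m, ‖β i‖ = 1)
    (P : Set (EuclideanSpace ℝ (Fin d)))
    (hP : P = {x : EuclideanSpace ℝ (Fin d) | ∀ i < m, 0 ≤ ⟪β i, x⟫ + (r - δ)})
    (hPin : Metric.closedBall (0 : EuclideanSpace ℝ (Fin d)) (r - δ) ⊆ P)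
    (hPout : P ⊆ Metric.closedBall (0 : EuclideanSpace ℝ (Fin d)) r)
    (x : ℕ → EuclideanSpace ℝ (Fin d))
    (hx0 : x 0 ∈ Metric.closedBall (0 : EuclideanSpace ℝ (Fin d)) r \ P)
    (hrec : ∀ i < m, x (i+1) = x i + max 0 (-(⟪β i, x i⟫ + (r - δ))) • β i) :
    x m ∈ frontier P := by
  obtain ⟨hs, hrs⟩ := pos_and_sq_le_of_delta hr hδr
  obtain ⟨s, hsdef⟩ : ∃ s, s = r - δ := ⟨_, rfl⟩
  rw [← hsdef] at hs hrs hP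
  have hx0r : ‖x 0‖ ^ 2 ≤ r ^ 2 :=
    pow_le_pow_left₀ (norm_nonneg _) (mem_closedBall_zero_iff.mp hx0.1) 2
  -- The last conjunct records that, once a step has moved the point, some constraint is tight.
  have inv : ∀ k ≤ m, ‖x k‖ ^ 2 ≤ r ^ 2 ∧ (∀ i < k, -s ≤ ⟪β i, x k⟫) ∧
      (x k = x 0 ∨ ∃ j < m, ⟪β j, x k⟫ = -s) := by
    intro k
    induction k with
    | zero => exact fun _ => ⟨hx0r, by simp, Or.inl rfl⟩
    | succ k ih =>
      intro hk
      have hkm : k < m := hk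
      obtain ⟨hn, hc, hj⟩ := ih hkm.le
      have hstep := hrec k hkm
      rw [← hsdef] at hstep
      rcases le_total (-s) ⟪β k, x k⟫ with hin | hout
      · rw [max_eq_left (by linarith), zero_smul, add_zero] at hstep
        rw [hstep]
        refine ⟨hn, fun i hi => ?_, hj⟩
        rcases Nat.lt_succ_iff_lt_or_eq.mp hi with h | rfl
        · exact hc i h
        · exact hin
      · rw [max_eq_right (by linarith)] at hstep
        obtain ⟨t, ht⟩ : ∃ t, t = -(⟪β k, x k⟫ + s) := ⟨_, rfl⟩
        rw [← ht] at hstep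
        have ht0 : 0 ≤ t := by linarith
        have hbx : ⟪β k, x k⟫ = -s - t := by linarith
        have hn' := (norm_sq_step_le (hβ k hkm) hs.le ht0 hbx).trans hn
        have htight : ⟪β k, x k + t • β k⟫ = -s := by
          rw [inner_add_right, inner_smul_right, real_inner_self_eq_norm_sq, hβ k hkm, hbx]
          ring
        rw [hstep]
        refine ⟨hn', fun i hi => ?_, Or.inr ⟨k, hkm, htight⟩⟩
        rcases Nat.lt_succ_iff_lt_or_eq.mp hi with h | rfl
        · exact constraint_preserved (hβ i (h.trans hkm)) (hβ k hkm) hs ht0 hbx (hc i h)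
            (hn'.trans hrs)
        · exact htight.ge
  obtain ⟨-, hc, hj⟩ := inv m le_rfl
  have hmem : x m ∈ P := by
    rw [hP]
    intro i hi
    linarith [hc i hi]
  refine ⟨subset_closure hmem, ?_⟩
  rcases hj with h0 | ⟨j, hjm, hj⟩
  · exact absurd (h0 ▸ hmem) hx0.2
  · refine notMem_interior_of_inner_eq (hβ j hjm) (fun z hz => ?_) hj
    rw [hP] at hz
    linarith [hz j hjm]
end
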